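/- arXiv:1402.0424 — 2 statements merged into one kernel-verified Lean document; each statement's English description precedes it below -/
import Mathlib

section
/- Let f be a C^{k+1} diffeomorphism of S¹ (k ≥ 0) without fixed points. If f preserves a C^k volume form on the cylinder C, then f is conjugate to a rotation by a C^{k+1} diffeomorphism of S¹. -/
/-!
Write `x ↦ f x` for the diffeomorphism and `ω` for the invariant form. Since `f` has no fixed point,
it preserves the orientation (a map of degree `-1` has a fixed point,
`degree_one_of_fixedPointFree`), and its graph lies in the cylinder. Restricting `ω` to the graph
gives the positive `C^k` function `φ x = ω (x, f x) * f' x`, and the invariance of `ω` at the pair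
`(x, f x)` reads `φ (f x) * f' x ^ 2 = φ x`. Hence the density `√φ dx` is positive, of class `C^k`
and `f`-invariant. Its primitive, normalized to total mass `1`, is a `C^(k+1)` coordinate on the
circle in which `f` is a translation (`exists_linearization`).

All this takes place on lifts to `ℝ`; `para_eq_iff` and `para_surjective` identify the projective
line with `ℝ/ℤ`, and `circleDeriv_para` computes the derivative from any differentiable lift.
-/

noncomputable section

open Real Set Function MeasureTheory
open scoped Classical

/-- The circle, modeled as the real projective line `ℝP¹`. -/
abbrev RP1 : Type := Projectivization ℝ (Fin 2 → ℝ)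

instance : TopologicalSpace RP1 :=
  inferInstanceAs (TopologicalSpace (Quotient (projectivizationSetoid ℝ (Fin 2 → ℝ))))

instance : MeasurableSpace RP1 := borel RP1
instance : BorelSpace RP1 := ⟨rfl⟩

lemma cossin_ne_zero (t : ℝ) : ![Real.cos (π * t), Real.sin (π * t)] ≠ 0 := by
  intro h
  have h0 : Real.cos (π * t) = 0 := by simpa using congrFun h 0
  have h1 : Real.sin (π * t) = 0 := by simpa using congrFun h 1
  have h2 := Real.sin_sq_add_cos_sq (π * t)
  rw [h0, h1] at h2
  norm_num at h2

/-- The standard (angular) parametrization `ℝ → ℝP¹`; it has period `1` and realizes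
the identification `S¹ = ℝ/ℤ ≃ ℝP¹`. -/
def para (t : ℝ) : RP1 :=
  Projectivization.mk ℝ ![Real.cos (π * t), Real.sin (π * t)] (cossin_ne_zero t)

/-- `F : ℝ → ℝ` is a lift of the circle map `f` through the angular parametrization. -/
def IsLift (F : ℝ → ℝ) (f : RP1 → RP1) : Prop :=
  ∀ t : ℝ, f (para t) = para (F t)

/-- `f` is a `C^k` diffeomorphism of the circle: it admits a `C^k` lift of degree `±1`
with nowhere vanishing derivative. -/
def IsCircleDiffeo (k : ℕ∞) (f : RP1 → RP1) : Prop :=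
  ∃ F : ℝ → ℝ, IsLift F f ∧ ContDiff ℝ k F ∧ (∀ t : ℝ, deriv F t ≠ 0) ∧
    ((∀ t : ℝ, F (t + 1) = F t + 1) ∨ (∀ t : ℝ, F (t + 1) = F t - 1))

/-- `f` is a real-analytic diffeomorphism of the circle. -/
def IsAnalyticCircleDiffeo (f : RP1 → RP1) : Prop :=
  ∃ F : ℝ → ℝ, IsLift F f ∧ AnalyticOnNhd ℝ F Set.univ ∧ (∀ t : ℝ, deriv F t ≠ 0) ∧
    ((∀ t : ℝ, F (t + 1) = F t + 1) ∨ (∀ t : ℝ, F (t + 1) = F t - 1))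

/-- The derivative of a circle map at a point, computed in the angular coordinate via a
differentiable lift. (Any two differentiable lifts differ by an integer constant, and the
derivative of a lift is `1`-periodic, so this does not depend on any choice.) -/
def circleDeriv (f : RP1 → RP1) (x : RP1) : ℝ :=
  if h : ∃ F : ℝ → ℝ, IsLift F f ∧ Differentiable ℝ F
  then deriv h.choose (Function.invFun para x) else 0

/-- The `n`-th derivative of a smooth circle map at a point, in the angular coordinate. -/
def circleDerivN (n : ℕ) (f : RP1 → RP1) (x : RP1) : ℝ :=
  if h : ∃ F : ℝ → ℝ, IsLift F f ∧ ContDiff ℝ (⊤ : ℕ∞) F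
  then iteratedDeriv n h.choose (Function.invFun para x) else 0

/-- The expression of a function on `S¹ × S¹` in the angular coordinates. -/
def chartDensity (ω : RP1 → RP1 → ℝ) : ℝ × ℝ → ℝ := fun q => ω (para q.1) (para q.2)

/-- The lift to `ℝ × ℝ` of the complement of the diagonal in `S¹ × S¹`. -/
def offDiag2 : Set (ℝ × ℝ) := {q : ℝ × ℝ | para q.1 ≠ para q.2}

/-- A `C^k` volume form on the cylinder `C = S¹ × S¹ \ Δ`: a positive function of class
`C^k` (in the angular coordinates) off the diagonal. -/
def IsVolumeForm (k : ℕ∞) (ω : RP1 → RP1 → ℝ) : Prop :=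
  (∀ x y : RP1, x ≠ y → 0 < ω x y) ∧ ContDiffOn ℝ k (chartDensity ω) offDiag2

/-- A real-analytic volume form on the cylinder `C = S¹ × S¹ \ Δ`. -/
def IsAnalyticVolumeForm (ω : RP1 → RP1 → ℝ) : Prop :=
  (∀ x y : RP1, x ≠ y → 0 < ω x y) ∧ AnalyticOnNhd ℝ (chartDensity ω) offDiag2

/-- The circle diffeomorphism `f` preserves the volume form `ω` on the cylinder:
`ω (f x) (f y) · f'(x) · f'(y) = ω x y` for all `x ≠ y`. -/
def PreservesForm (f : RP1 → RP1) (ω : RP1 → RP1 → ℝ) : Prop :=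
  ∀ x y : RP1, x ≠ y →
    ω (f x) (f y) * circleDeriv f x * circleDeriv f y = ω x y

abbrev SL2 : Type := Matrix.SpecialLinearGroup (Fin 2) ℝ

/-- The projective action of `SL(2,ℝ)` on `ℝP¹`; its image in the maps of `ℝP¹`
is the group `PSL(2,ℝ)`. -/
def mobius (M : SL2) : RP1 → RP1 :=
  Projectivization.map (Matrix.SpecialLinearGroup.toLin' M : (Fin 2 → ℝ) →ₗ[ℝ] Fin 2 → ℝ)
    (Matrix.SpecialLinearGroup.toLin' M).injective

/-- `f` is an element of `PSL(2,ℝ)`, viewed as a self-map of the circle `ℝP¹`. -/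
def IsMobius (f : RP1 → RP1) : Prop := ∃ M : SL2, f = mobius M

lemma rot_det (α : ℝ) :
    Matrix.det !![Real.cos (π * α), -Real.sin (π * α); Real.sin (π * α), Real.cos (π * α)] = 1 := by
  rw [Matrix.det_fin_two_of]
  nlinarith [Real.sin_sq_add_cos_sq (π * α)]

/-- The rotation of angle `α` (in the angular coordinate of total length `1`), as an
element of `SL(2,ℝ)`: `mobius (rotSL α)` is the rotation `para t ↦ para (t + α)`. -/
def rotSL (α : ℝ) : SL2 :=
  ⟨!![Real.cos (π * α), -Real.sin (π * α); Real.sin (π * α), Real.cos (π * α)], rot_det α⟩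

section Reps

variable {Γ : Type*} [Group Γ]

/-- The action `ρ` has no finite orbit on the circle. -/
def HasNoFiniteOrbit (ρ : Γ →* Equiv.Perm RP1) : Prop :=
  ∀ x : RP1, (Set.range fun γ : Γ => ρ γ x).Infinite

/-- The action `ρ` has a dense orbit on the circle. -/
def HasDenseOrbit (ρ : Γ →* Equiv.Perm RP1) : Prop :=
  ∃ x : RP1, Dense (Set.range fun γ : Γ => ρ γ x)

/-- `L` is the limit set of the action `ρ`: the minimal nonempty closed invariant subset. -/
def IsLimitSet (ρ : Γ →* Equiv.Perm RP1) (L : Set RP1) : Prop :=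
  L.Nonempty ∧ IsClosed L ∧ (∀ γ : Γ, (ρ γ) '' L = L) ∧
    ∀ L' : Set RP1, L'.Nonempty → IsClosed L' → (∀ γ : Γ, (ρ γ) '' L' = L') → L ⊆ L'

/-- `ρ` is area-preserving: the diagonal action on the cylinder preserves a smooth
volume form. -/
def AreaPreserving (ρ : Γ →* Equiv.Perm RP1) : Prop :=
  ∃ ω : RP1 → RP1 → ℝ, IsVolumeForm (⊤ : ℕ∞) ω ∧ ∀ γ : Γ, PreservesForm (ρ γ) ω

/-- `ρ` is topologically Fuchsian: conjugate to a subgroup of `PSL(2,ℝ)` by a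
homeomorphism of the circle. -/
def TopologicallyFuchsian (ρ : Γ →* Equiv.Perm RP1) : Prop :=
  ∃ h : RP1 ≃ₜ RP1, ∀ γ : Γ, IsMobius fun x => h.symm (ρ γ (h x))

/-- `ρ` is differentially Fuchsian: conjugate to a subgroup of `PSL(2,ℝ)` by a `C^∞`
diffeomorphism of the circle. -/
def DifferentiallyFuchsian (ρ : Γ →* Equiv.Perm RP1) : Prop :=
  ∃ h g : RP1 → RP1, IsCircleDiffeo (⊤ : ℕ∞) h ∧ IsCircleDiffeo (⊤ : ℕ∞) g ∧
    (∀ x, g (h x) = x) ∧ (∀ x, h (g x) = x) ∧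
    ∀ γ : Γ, IsMobius fun x => g (ρ γ (h x))

/-- `ρ` is analytically Fuchsian: conjugate to a subgroup of `PSL(2,ℝ)` by a real-analytic
diffeomorphism of the circle. -/
def AnalyticallyFuchsian (ρ : Γ →* Equiv.Perm RP1) : Prop :=
  ∃ h g : RP1 → RP1, IsAnalyticCircleDiffeo h ∧ IsAnalyticCircleDiffeo g ∧
    (∀ x, g (h x) = x) ∧ (∀ x, h (g x) = x) ∧
    ∀ γ : Γ, IsMobius fun x => g (ρ γ (h x))

end Reps

/-- The "Lebesgue" measure on the circle, transported from `[0,1)` by the angular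
parametrization. -/
def circleMeasure : Measure RP1 :=
  Measure.map para (volume.restrict (Set.Ico (0 : ℝ) 1))

/-- The measure on `S¹ × S¹` with density `ω` with respect to Lebesgue measure. -/
def volumeFormMeasure (ω : RP1 → RP1 → ℝ) : Measure (RP1 × RP1) :=
  (circleMeasure.prod circleMeasure).withDensity fun q => ENNReal.ofReal (ω q.1 q.2)

-- extras appended to base
section Extra

open scoped UpperHalfPlane

/-- The affine chart `ℝ → ℝP¹`, `u ↦ [u : 1]`, realizing `S¹ = ℝ ∪ {∞}`. -/
def aff (u : ℝ) : RP1 :=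
  Projectivization.mk ℝ ![u, (1 : ℝ)] (by
    intro h
    simpa using congrFun h 1)

/-- The curvature `K = (2/ω) ∂²(log ω)/∂x∂y` (in the angular coordinates) of the Lorentz
metric associated to the volume form `ω` on the cylinder. -/
def curvature (ω : RP1 → RP1 → ℝ) (x y : RP1) : ℝ :=
  (2 / ω x y) *
    deriv (fun t : ℝ =>
        deriv (fun s : ℝ => Real.log (ω (para t) (para s))) (Function.invFun para y))
      (Function.invFun para x)

/-- The Schwarzian derivative of `f` (with respect to the standard projective structure of
`ℝP¹`) vanishes at `x`: `f` agrees to third order at `x` with some element of `PSL(2,ℝ)`. -/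
def SchwarzianVanishesAt (f : RP1 → RP1) (x : RP1) : Prop :=
  ∃ M : SL2, f x = mobius M x ∧
    circleDerivN 1 f x = circleDerivN 1 (mobius M) x ∧
    circleDerivN 2 f x = circleDerivN 2 (mobius M) x ∧
    circleDerivN 3 f x = circleDerivN 3 (mobius M) x

/-- The action on the hyperbolic plane of an element of `PSL(2,ℝ)`, given as a self-map of
the circle. (Well defined: matrices `±M` induce the same map on `ℝP¹` and on `ℍ`.) -/
def mobiusHAct (f : RP1 → RP1) : ℍ → ℍ :=
  if h : ∃ M : SL2, f = mobius M then fun z => h.choose • z else id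

/-- A subset of the hyperbolic plane is (geodesically) convex iff it contains every point
lying between two of its points. -/
def HypConvex (C : Set ℍ) : Prop :=
  ∀ x ∈ C, ∀ y ∈ C, ∀ z : ℍ, dist x z + dist z y = dist x y → z ∈ C

/-- A Cantor subset of the circle: nonempty, perfect, with empty interior. -/
def IsCantorSet (L : Set RP1) : Prop :=
  L.Nonempty ∧ Perfect L ∧ interior L = ∅

/-- `ρ` is a convex cocompact representation in `PSL(2,ℝ)`: it is injective, takes values in
`PSL(2,ℝ)`, is discrete (acts properly discontinuously on `ℍ`), its limit set is a Cantor
set, and it acts cocompactly on some nonempty closed convex invariant subset of `ℍ`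
(equivalently, on the convex hull of its limit set). -/
def IsConvexCocompact {Γ : Type*} [Group Γ] (ρ : Γ →* Equiv.Perm RP1) : Prop :=
  Function.Injective ρ ∧ (∀ γ : Γ, IsMobius (ρ γ)) ∧
  (∀ K : Set ℍ, IsCompact K →
    {γ : Γ | ((mobiusHAct (ρ γ) '' K) ∩ K).Nonempty}.Finite) ∧
  (∃ L : Set RP1, IsLimitSet ρ L) ∧
  (∀ L : Set RP1, IsLimitSet ρ L → IsCantorSet L) ∧
  ∃ C : Set ℍ, C.Nonempty ∧ IsClosed C ∧ HypConvex C ∧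
    (∀ γ : Γ, mobiusHAct (ρ γ) '' C = C) ∧
    ∃ K : Set ℍ, IsCompact K ∧ C ⊆ ⋃ γ : Γ, mobiusHAct (ρ γ) '' K

/-- Two circle maps are `ε`-close in the `C¹` topology. -/
def C1Close (f g : RP1 → RP1) (ε : ℝ) : Prop :=
  ∃ F G : ℝ → ℝ, IsLift F f ∧ IsLift G g ∧ ContDiff ℝ 1 F ∧ ContDiff ℝ 1 G ∧
    ∀ t : ℝ, |F t - G t| ≤ ε ∧ |deriv F t - deriv G t| ≤ ε

/-- `ρ` is spectrally Möbius-like: every nontrivial element has at most two fixed points,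
and at a pair of fixed points `N, S` the derivatives satisfy `f'(N)·f'(S) = 1`, `f'(N) ≠ 1`. -/
def SpectrallyMobiusLike {Γ : Type*} [Group Γ] (ρ : Γ →* Equiv.Perm RP1) : Prop :=
  ∀ γ : Γ, ρ γ ≠ 1 →
    {x : RP1 | ρ γ x = x}.encard ≤ 2 ∧
    ∀ N S : RP1, N ≠ S → {x : RP1 | ρ γ x = x} = {N, S} →
      circleDeriv (ρ γ) N * circleDeriv (ρ γ) S = 1 ∧ circleDeriv (ρ γ) N ≠ 1

end Extra

/-! ### The angular parametrization and circle maps -/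

lemma para_eq_iff {s t : ℝ} : para s = para t ↔ ∃ n : ℤ, s = t + n := by
  unfold para
  rw [Projectivization.mk_eq_mk_iff']
  constructor
  · rintro ⟨a, ha⟩
    have h0 : a * Real.cos (π * t) = Real.cos (π * s) := by simpa using congrFun ha 0
    have h1 : a * Real.sin (π * t) = Real.sin (π * s) := by simpa using congrFun ha 1
    have h2 : Real.sin (π * s - π * t) = 0 := by
      rw [Real.sin_sub, ← h0, ← h1]; ring
    obtain ⟨n, hn⟩ := Real.sin_eq_zero_iff.1 h2
    refine ⟨n, ?_⟩
    have : π * (n - (s - t)) = 0 := by linarith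
    rcases mul_eq_zero.1 this with h | h
    · exact absurd h Real.pi_ne_zero
    · linarith
  · rintro ⟨n, rfl⟩
    have hs : Real.sin (n * π) = 0 := Real.sin_int_mul_pi n
    refine ⟨Real.cos (n * π), ?_⟩
    rw [mul_add, mul_comm π (n : ℝ)]
    ext i
    fin_cases i
    · simp [Real.cos_add, hs, mul_comm (Real.cos (n * π))]
    · simp [Real.sin_add, hs, mul_comm (Real.cos (n * π))]

lemma para_surjective : Function.Surjective para := by
  intro x
  induction x using Projectivization.ind with
  | h v hv =>
    set z : ℂ := ⟨v 0, v 1⟩ with hz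
    have hz0 : ‖z‖ ≠ 0 := by
      intro h
      rw [norm_eq_zero] at h
      apply hv
      ext i
      fin_cases i
      · simpa [hz] using congrArg Complex.re h
      · simpa [hz] using congrArg Complex.im h
    refine ⟨Complex.arg z / π, ?_⟩
    unfold para
    rw [Projectivization.mk_eq_mk_iff']
    refine ⟨‖z‖⁻¹, ?_⟩
    have hpi : π * (Complex.arg z / π) = Complex.arg z := by field_simp
    have e0 : ‖z‖ * Real.cos (Complex.arg z) = v 0 := Complex.norm_mul_cos_arg z
    have e1 : ‖z‖ * Real.sin (Complex.arg z) = v 1 := Complex.norm_mul_sin_arg z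
    rw [hpi]
    ext i
    fin_cases i
    · simp only [Pi.smul_apply, smul_eq_mul, Fin.zero_eta, Matrix.cons_val_zero, ← e0]
      field_simp
    · simp only [Pi.smul_apply, smul_eq_mul, Fin.mk_one, Matrix.cons_val_one,
        Matrix.cons_val_zero, ← e1]
      field_simp

lemma para_invFun (x : RP1) : para (Function.invFun para x) = x :=
  Function.rightInverse_invFun para_surjective x

lemma mobius_rotSL_para (α t : ℝ) : mobius (rotSL α) (para t) = para (t + α) := by
  unfold mobius para
  rw [Projectivization.map_mk, Projectivization.mk_eq_mk_iff']
  refine ⟨1, ?_⟩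
  rw [one_smul]
  have happ : ∀ v : Fin 2 → ℝ, (Matrix.SpecialLinearGroup.toLin' (rotSL α) :
      (Fin 2 → ℝ) →ₗ[ℝ] Fin 2 → ℝ) v = (rotSL α).1.mulVec v := fun v =>
    Matrix.SpecialLinearGroup.toLin'_apply _ v
  rw [happ]
  ext i
  fin_cases i
  · simp [rotSL, mul_add, Real.cos_add, Matrix.mulVec, dotProduct, Fin.sum_univ_two]
    ring
  · simp [rotSL, mul_add, Real.sin_add, Matrix.mulVec, dotProduct, Fin.sum_univ_two]
    ring

lemma map_add_int {F : ℝ → ℝ} (hF : ∀ t, F (t + 1) = F t + 1) (n : ℤ) (t : ℝ) :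
    F (t + n) = F t + n := by
  induction n with
  | zero => simp
  | succ m ih =>
    have := hF (t + (m : ℤ))
    push_cast at *
    rw [← add_assoc, this, ih]; ring
  | pred m ih =>
    have := hF (t + (-(m : ℤ) - 1 : ℤ))
    push_cast at *
    rw [show t + (-(m : ℝ) - 1) + 1 = t + -(m : ℝ) by ring, ih] at this
    linarith

/-- The difference `d` of two lifts is integer valued, so `sin (π d) = 0`; differentiating this
relation gives `d' = 0`. -/
lemma IsLift.deriv_eq {f : RP1 → RP1} {F G : ℝ → ℝ} (hF : IsLift F f) (hG : IsLift G f)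
    (dF : Differentiable ℝ F) (dG : Differentiable ℝ G) (t : ℝ) : deriv F t = deriv G t := by
  have hz : (fun s => Real.sin (π * (F s - G s))) = fun _ => 0 := by
    funext s
    obtain ⟨n, hn⟩ := para_eq_iff.1 ((hF s).symm.trans (hG s))
    rw [hn, add_sub_cancel_left, mul_comm]
    exact Real.sin_int_mul_pi n
  have hd : HasDerivAt (fun s => Real.sin (π * (F s - G s)))
      (Real.cos (π * (F t - G t)) * (π * (deriv F t - deriv G t))) t :=
    (((dF t).hasDerivAt.sub (dG t).hasDerivAt).const_mul π).sin
  have h0 : Real.cos (π * (F t - G t)) * (π * (deriv F t - deriv G t)) = 0 := by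
    rw [hz] at hd
    exact hd.unique (hasDerivAt_const t (0 : ℝ))
  have hs : Real.sin (π * (F t - G t)) = 0 := congrFun hz t
  have hc : Real.cos (π * (F t - G t)) ≠ 0 := by
    intro h
    have := Real.sin_sq_add_cos_sq (π * (F t - G t))
    rw [hs, h] at this
    norm_num at this
  have := (mul_eq_zero.1 ((mul_eq_zero.1 h0).resolve_left hc)).resolve_left Real.pi_ne_zero
  linarith

lemma deriv_add_int {F : ℝ → ℝ} (hF : ∀ t, F (t + 1) = F t + 1) (n : ℤ) (t : ℝ) :
    deriv F (t + n) = deriv F t := by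
  rw [← deriv_comp_add_const F (n : ℝ) t]
  simp [map_add_int hF n]

lemma circleDeriv_para {f : RP1 → RP1} {F : ℝ → ℝ} (hF : IsLift F f) (dF : Differentiable ℝ F)
    (h1 : ∀ t, F (t + 1) = F t + 1) (t : ℝ) : circleDeriv f (para t) = deriv F t := by
  have h : ∃ F : ℝ → ℝ, IsLift F f ∧ Differentiable ℝ F := ⟨F, hF, dF⟩
  unfold circleDeriv
  rw [dif_pos h, h.choose_spec.1.deriv_eq hF h.choose_spec.2 dF]
  obtain ⟨n, hn⟩ := para_eq_iff.1 (para_invFun (para t))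
  rw [hn, deriv_add_int h1]

/-- The circle map induced by `G : ℝ → ℝ`, evaluated on a chosen representative in `ℝ`; `G` is a
lift of it as soon as `G (t + 1) = G t + 1`. -/
def descend (G : ℝ → ℝ) (x : RP1) : RP1 := para (G (Function.invFun para x))

lemma isLift_descend {G : ℝ → ℝ} (hG : ∀ t, G (t + 1) = G t + 1) : IsLift G (descend G) := by
  intro t
  obtain ⟨n, hn⟩ := para_eq_iff.1 (para_invFun (para t))
  rw [descend, hn, map_add_int hG, para_eq_iff]
  exact ⟨n, rfl⟩

/-! ### Fixed-point free diffeomorphisms -/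

/-- A map of degree `-1` has a fixed point: `F t - t` drops by `2` over a period, so it takes an
integer value. -/
lemma degree_one_of_fixedPointFree {f : RP1 → RP1} {F : ℝ → ℝ} (hF : IsLift F f)
    (cF : Continuous F) (hfix : ∀ x, f x ≠ x)
    (h : (∀ t : ℝ, F (t + 1) = F t + 1) ∨ (∀ t : ℝ, F (t + 1) = F t - 1)) :
    ∀ t : ℝ, F (t + 1) = F t + 1 := by
  rcases h with h | h
  · exact h
  exfalso
  have h1 := h 0
  rw [zero_add] at h1
  have hmem : (⌊F 0⌋ : ℝ) ∈ Set.Icc ((fun t => F t - t) 1) ((fun t => F t - t) 0) := by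
    have := Int.floor_le (F 0)
    have := Int.lt_floor_add_one (F 0)
    constructor <;> simp only [h1] <;> linarith
  obtain ⟨t, ht⟩ := intermediate_value_univ (1 : ℝ) 0 (cF.sub continuous_id) hmem
  apply hfix (para t)
  rw [hF t, para_eq_iff]
  refine ⟨⌊F 0⌋, ?_⟩
  have ht' : F t - t = ⌊F 0⌋ := ht
  linarith

lemma deriv_pos_of_degree_one {F : ℝ → ℝ} (dF : Differentiable ℝ F) (cF : Continuous (deriv F))
    (h0 : ∀ t, deriv F t ≠ 0) (h1 : ∀ t, F (t + 1) = F t + 1) (t : ℝ) : 0 < deriv F t := by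
  by_contra hneg
  obtain ⟨c, -, hc⟩ := exists_deriv_eq_slope F zero_lt_one dF.continuous.continuousOn
    dF.differentiableOn
  have h2 := h1 0
  rw [zero_add] at h2
  have hc' : deriv F c = 1 := by rw [hc, h2]; ring
  obtain ⟨s, hs⟩ := intermediate_value_univ t c cF
    (⟨not_lt.1 hneg, by rw [hc']; exact zero_le_one⟩ : (0 : ℝ) ∈ Set.Icc (deriv F t) (deriv F c))
  exact h0 s hs

/-! ### Linearization by an invariant positive density -/

/-- A lift `F` preserving a positive periodic density `ψ dt` is conjugate to the translation by the
constant `G (F t) - G t`, where `G` is the normalized primitive of `ψ`. -/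
lemma exists_linearization (k : ℕ∞) {F ψ : ℝ → ℝ} (dF : Differentiable ℝ F)
    (hψ : ContDiff ℝ k ψ) (pos : ∀ t, 0 < ψ t) (per : ∀ t, ψ (t + 1) = ψ t)
    (inv : ∀ t, ψ (F t) * deriv F t = ψ t) :
    ∃ (G : ℝ ≃ₜ ℝ) (α : ℝ), ContDiff ℝ (k + 1 : ℕ∞) G ∧ (∀ t, 0 < deriv G t) ∧
      (∀ t, G (t + 1) = G t + 1) ∧ ∀ t, G (F t) = G t + α := by
  have cψ : Continuous ψ := hψ.continuous
  set c : ℝ := ∫ t in (0 : ℝ)..1, ψ t with hc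
  have cpos : 0 < c := intervalIntegral.integral_pos zero_lt_one cψ.continuousOn
    (fun t _ => (pos t).le) ⟨0, by simp, pos 0⟩
  set G₀ : ℝ → ℝ := fun t => (∫ s in (0 : ℝ)..t, ψ s) / c with hG₀
  have hder : ∀ t, HasDerivAt G₀ (ψ t / c) t := fun t =>
    (cψ.integral_hasStrictDerivAt 0 t).hasDerivAt.div_const c
  have dG : Differentiable ℝ G₀ := fun t => (hder t).differentiableAt
  have hderiv : deriv G₀ = fun t => ψ t / c := funext fun t => (hder t).deriv
  have dpos : ∀ t, 0 < deriv G₀ t := fun t => by rw [hderiv]; exact div_pos (pos t) cpos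
  have hsmooth : ContDiff ℝ (k + 1 : ℕ∞) G₀ := by
    have : ((k + 1 : ℕ∞) : WithTop ℕ∞) = (k : WithTop ℕ∞) + 1 := by push_cast; rfl
    rw [this, contDiff_succ_iff_deriv]
    refine ⟨dG, fun h => absurd h (by simp), ?_⟩
    rw [hderiv]
    exact hψ.div_const c
  have hstep : ∀ t, G₀ (t + 1) = G₀ t + 1 := by
    intro t
    have hp : ∫ s in t..t + 1, ψ s = c := by
      rw [Function.Periodic.intervalIntegral_add_eq (f := ψ) (T := 1) per t 0, zero_add]
    have := intervalIntegral.integral_add_adjacent_intervals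
      (cψ.intervalIntegrable (μ := volume) 0 t) (cψ.intervalIntegrable (μ := volume) t (t + 1))
    simp only [hG₀]
    rw [← this, hp, add_div, div_self cpos.ne']
  have hmono : StrictMono G₀ := strictMono_of_deriv_pos dpos
  have hsurj : Function.Surjective G₀ := by
    intro y
    have h0 : G₀ 0 = 0 := by simp [hG₀]
    have hn : ∀ n : ℤ, G₀ n = n := fun n => by
      simpa [h0] using map_add_int hstep n 0
    apply intermediate_value_univ (⌊y⌋ : ℝ) ((⌊y⌋ + 1 : ℤ) : ℝ) dG.continuous
    rw [hn, hn]
    push_cast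
    exact ⟨Int.floor_le y, (Int.lt_floor_add_one y).le⟩
  have hconst : ∀ t, G₀ (F t) - G₀ t = G₀ (F 0) - G₀ 0 := by
    have hd : ∀ t, HasDerivAt (fun t => G₀ (F t) - G₀ t)
        (ψ (F t) / c * deriv F t - ψ t / c) t := fun t =>
      ((hder (F t)).comp t (dF t).hasDerivAt).sub (hder t)
    intro t
    refine is_const_of_deriv_eq_zero (fun t => (hd t).differentiableAt) (fun t => ?_) t 0
    rw [(hd t).deriv, ← inv t]
    ring
  refine ⟨(hmono.orderIsoOfSurjective G₀ hsurj).toHomeomorph, G₀ (F 0) - G₀ 0,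
    hsmooth, dpos, hstep, fun t => ?_⟩
  change G₀ (F t) = G₀ t + _
  linarith [hconst t]

/-- A fixed point free `C^(k+1)` circle diffeomorphism preserving a `C^k` volume form on
the cylinder is conjugate to a rotation by a `C^(k+1)` diffeomorphism. -/
theorem stmt_3 (k : ℕ∞) (f : RP1 → RP1) (hf : IsCircleDiffeo (k + 1) f)
    (hfix : ∀ x : RP1, f x ≠ x)
    (ω : RP1 → RP1 → ℝ) (hω : IsVolumeForm k ω) (hpres : PreservesForm f ω) :
    ∃ (α : ℝ) (h g : RP1 → RP1), IsCircleDiffeo (k + 1) h ∧ IsCircleDiffeo (k + 1) g ∧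
      (∀ x, g (h x) = x) ∧ (∀ x, h (g x) = x) ∧
      ∀ x : RP1, g (f (h x)) = mobius (rotSL α) x := by
  obtain ⟨F, hF, cF, F0, hdeg⟩ := hf
  have hk : ((k + 1 : ℕ∞) : WithTop ℕ∞) = (k : WithTop ℕ∞) + 1 := by push_cast; rfl
  have cF' := cF
  rw [hk, contDiff_succ_iff_deriv] at cF'
  obtain ⟨dF, -, cdF⟩ := cF'
  have h1 := degree_one_of_fixedPointFree hF dF.continuous hfix hdeg
  have Fpos := deriv_pos_of_degree_one dF cdF.continuous F0 h1
  have hne : ∀ t, para t ≠ para (F t) := fun t h => hfix (para t) ((hF t).trans h.symm)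
  set φ : ℝ → ℝ := fun t => ω (para t) (para (F t)) * deriv F t with hφ
  have φpos : ∀ t, 0 < φ t := fun t => mul_pos (hω.1 _ _ (hne t)) (Fpos t)
  have cφ : ContDiff ℝ k φ := by
    have hFk : ContDiff ℝ k F := cF.of_le (by rw [hk]; exact le_self_add)
    have := hω.2.comp_contDiff (contDiff_id.prodMk hFk) (fun t => hne t)
    exact this.mul cdF
  have para_add_one : ∀ t, para (t + 1) = para t := fun t => para_eq_iff.2 ⟨1, by simp⟩
  have φper : ∀ t, φ (t + 1) = φ t := by
    intro t
    have hd := deriv_add_int h1 1 t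
    push_cast at hd
    simp only [hφ, h1, para_add_one, hd]
  -- Invariance of `ω` at the pair `(x, f x)`.
  have φinv : ∀ t, φ (F t) * deriv F t ^ 2 = φ t := by
    intro t
    have := hpres _ _ (hne t)
    rw [hF, hF, circleDeriv_para hF dF h1, circleDeriv_para hF dF h1] at this
    simp only [hφ]
    rw [← this]
    ring
  obtain ⟨G, α, cG, Gpos, hG, hconj⟩ := exists_linearization k dF
    (cφ.sqrt fun t => (φpos t).ne') (fun t => Real.sqrt_pos.2 (φpos t))
    (fun t => by rw [φper])
    (fun t => by
      rw [← φinv t, Real.sqrt_mul (φpos _).le, Real.sqrt_sq (Fpos t).le])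
  have dG : Differentiable ℝ G := cG.differentiable (by simp)
  have hGs : ∀ t, G.symm (t + 1) = G.symm t + 1 := by
    intro t
    apply G.injective
    simp [hG]
  have lG := isLift_descend hG
  have lGs := isLift_descend hGs
  refine ⟨α, descend G.symm, descend G,
    ⟨G.symm, lGs, ?_, fun t => ?_, Or.inl hGs⟩,
    ⟨G, lG, cG, fun t => (Gpos t).ne', Or.inl hG⟩, fun x => ?_, fun x => ?_, fun x => ?_⟩
  · exact G.contDiff_symm_deriv (fun t => (Gpos t).ne') (fun t => (dG t).hasDerivAt) cG
  · have := HasDerivAt.of_local_left_inverse (f := G) G.symm.continuous.continuousAt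
      (dG (G.symm t)).hasDerivAt (Gpos _).ne' (Filter.Eventually.of_forall G.apply_symm_apply)
    rw [this.deriv]
    exact inv_ne_zero (Gpos _).ne'
  all_goals obtain ⟨t, rfl⟩ := para_surjective x
  · rw [lGs, lG, G.apply_symm_apply]
  · rw [lG, lGs, G.symm_apply_apply]
  · rw [lGs, hF, lG, hconj, G.apply_symm_apply, mobius_rotSL_para]

end
end

section
/- Let Γ ⊂ PSL(2,ℝ) be a subgroup whose action on S¹ has no finite orbit and is not topologically transitive (i.e., it has an exceptional minimal set, a Cantor set L ⊊ S¹). Then there exists a non-constant smooth function σ : C → ℝ that is invariant under the diagonal action of Γ on C. -/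
/-!
The invariant function is a cutoff of the smallest cross-ratio seen from the limit set.
For `x, y` and `a, b ∈ L` put `c(a, b; x, y) = [a,x][b,y] / ([a,y][b,x])`, where `[·,·]` is the
determinant, and let `T(x, y)` be the infimum of `c(a, b; x, y)` over `a, b ∈ L`. Cross-ratios are
invariant under `PSL(2,ℝ)` and `Γ` permutes `L`, so `T` is `Γ`-invariant. The function is
`σ = φ ∘ T`, with `φ` smooth, vanishing on `(-∞, 1/4]` and positive on `(1/4, ∞)`. (If `x, y` lie
in one gap of `L` with endpoints `a, b`, then `|log T|` is their hyperbolic distance in that gap.)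

Smoothness at a point `(x₀, y₀)` off the diagonal. If some cross-ratio with nonzero denominator is
`< 1/4` at `(x₀, y₀)`, it stays so nearby and `σ` vanishes there; this applies as soon as `x₀` or
`y₀` lies in `L`, with a cross-ratio equal to `0`. Otherwise, by compactness of `L`, the infimum is
attained at some `(a₀, b₀)`, and the same pair remains a minimizer nearby (`cr_min_persists`):
by the Plücker relation `c(a, b; x, y) - 1` equals `[a,b][x,y] / ([a,y][b,x])`, so
its sign is constant while `x, y` move outside `L` without meeting. Hence `σ = φ ∘ c(a₀, b₀; ·, ·)`
near `(x₀, y₀)`.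

The function is not constant: it vanishes when `x ∈ L`, and it is positive when `x ∉ L` and `y`
is close to `x`, since all cross-ratios are then uniformly close to `1`.
-/

noncomputable section

open Real Set Function MeasureTheory
open scoped Classical

open Filter Topology

/-! ### Determinants and cross-ratios -/

/-- The determinant of two vectors of the plane. -/
def br (u v : Fin 2 → ℝ) : ℝ := u 0 * v 1 - u 1 * v 0

/-- The cross-ratio `[a,x][b,y] / ([a,y][b,x])` of four points of `ℝP¹`, computed on chosen
representatives; it is `0` when the denominator vanishes. -/
def cr (a b x y : RP1) : ℝ :=
  br a.rep x.rep * br b.rep y.rep / (br a.rep y.rep * br b.rep x.rep)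

lemma br_smul (k l : ℝ) (u v : Fin 2 → ℝ) : br (k • u) (l • v) = k * l * br u v := by
  simp [br]; ring

lemma cr_mk (a b x y : Fin 2 → ℝ) (ha : a ≠ 0) (hb : b ≠ 0) (hx : x ≠ 0) (hy : y ≠ 0) :
    cr (Projectivization.mk ℝ a ha) (Projectivization.mk ℝ b hb) (Projectivization.mk ℝ x hx)
      (Projectivization.mk ℝ y hy) = br a x * br b y / (br a y * br b x) := by
  obtain ⟨k1, h1⟩ := Projectivization.exists_smul_eq_mk_rep ℝ a ha
  obtain ⟨k2, h2⟩ := Projectivization.exists_smul_eq_mk_rep ℝ b hb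
  obtain ⟨k3, h3⟩ := Projectivization.exists_smul_eq_mk_rep ℝ x hx
  obtain ⟨k4, h4⟩ := Projectivization.exists_smul_eq_mk_rep ℝ y hy
  unfold cr
  rw [← h1, ← h2, ← h3, ← h4]
  simp only [Units.smul_def, br_smul]
  have hk : (k1 * k2 * k3 * k4 : ℝ) ≠ 0 := by simp
  rw [← mul_div_mul_left (br a x * br b y) (br a y * br b x) hk]
  congr 1 <;> ring

lemma br_eq_zero_iff (u v : Fin 2 → ℝ) (hu : u ≠ 0) (hv : v ≠ 0) :
    br u v = 0 ↔ Projectivization.mk ℝ u hu = Projectivization.mk ℝ v hv := by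
  rw [Projectivization.mk_eq_mk_iff']
  constructor
  · intro h
    unfold br at h
    by_cases h0 : v 0 = 0
    · have h1 : v 1 ≠ 0 := by
        intro h1; apply hv; ext i; fin_cases i <;> simp [h0, h1]
      have hu0 : u 0 = 0 := by simpa [h0, h1] using h
      refine ⟨u 1 / v 1, ?_⟩
      ext i; fin_cases i <;> simp [h0, h1, hu0]
    · refine ⟨u 0 / v 0, ?_⟩
      ext i; fin_cases i
      · simp [h0]
      · simp; field_simp; linarith
  · rintro ⟨k, rfl⟩
    simp [br]; ring

lemma br_rep_ne_zero {a b : RP1} (h : a ≠ b) : br a.rep b.rep ≠ 0 := by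
  intro h0
  rw [br_eq_zero_iff _ _ a.rep_nonzero b.rep_nonzero] at h0
  simp only [Projectivization.mk_rep] at h0
  exact h h0

lemma cr_mobius (M : SL2) (a b x y : RP1) :
    cr (mobius M a) (mobius M b) (mobius M x) (mobius M y) = cr a b x y := by
  induction a using Projectivization.ind with | _ a ha
  induction b using Projectivization.ind with | _ b hb
  induction x using Projectivization.ind with | _ x hx
  induction y using Projectivization.ind with | _ y hy
  have hM : ∀ u v : Fin 2 → ℝ, br (Matrix.SpecialLinearGroup.toLin' M u)
      (Matrix.SpecialLinearGroup.toLin' M v) = br u v := by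
    intro u v
    have hd := M.det_coe
    rw [Matrix.det_fin_two] at hd
    simp only [br, Matrix.SpecialLinearGroup.toLin'_apply, Matrix.toLin'_apply, Matrix.mulVec,
      dotProduct, Fin.sum_univ_two]
    linear_combination (u 0 * v 1 - u 1 * v 0) * hd
  unfold mobius
  simp only [Projectivization.map_mk]
  rw [cr_mk, cr_mk]
  simp only [LinearEquiv.coe_coe, hM]

/-- The Plücker relation, in terms of cross-ratios. -/
lemma cr_sub_one {a b x y : RP1} (hay : a ≠ y) (hbx : b ≠ x) :
    cr a b x y - 1 = br a.rep b.rep * br x.rep y.rep / (br a.rep y.rep * br b.rep x.rep) := by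
  have h1 := br_rep_ne_zero hay
  have h2 := br_rep_ne_zero hbx
  unfold cr
  rw [div_sub_one (mul_ne_zero h1 h2)]
  congr 1
  simp only [br]; ring

lemma cr_self {a x y : RP1} (hx : a ≠ x) (hy : a ≠ y) : cr a a x y = 1 := by
  have h1 := br_rep_ne_zero hx
  have h2 := br_rep_ne_zero hy
  unfold cr
  field_simp

lemma cr_mul {a b c x y : RP1} (hx : b ≠ x) (hy : b ≠ y) :
    cr a b x y * cr b c x y = cr a c x y := by
  have h1 := br_rep_ne_zero hx
  have h2 := br_rep_ne_zero hy
  unfold cr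
  rw [div_mul_div_comm,
    ← mul_div_mul_left (br a.rep x.rep * br c.rep y.rep) (br a.rep y.rep * br c.rep x.rep)
      (mul_ne_zero h1 h2)]
  congr 1 <;> ring

/-! ### The angular parametrization -/

/-- The unit vector of angle `π t`, representing `para t`. -/
def vec (t : ℝ) : Fin 2 → ℝ := ![Real.cos (π * t), Real.sin (π * t)]

lemma vec_ne_zero (t : ℝ) : vec t ≠ 0 := cossin_ne_zero t

lemma para_eq (t : ℝ) : para t = Projectivization.mk ℝ (vec t) (vec_ne_zero t) := rfl

lemma continuous_para : Continuous para := by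
  have h : Continuous (fun t : ℝ => (⟨vec t, vec_ne_zero t⟩ : {v : Fin 2 → ℝ // v ≠ 0})) := by
    apply Continuous.subtype_mk
    unfold vec
    fun_prop
  exact continuous_quotient_mk'.comp h

lemma exists_para (x : RP1) : ∃ t ∈ Icc (-1 : ℝ) 1, para t = x := by
  induction x using Projectivization.ind with | _ v hv
  set z : ℂ := ⟨v 0, v 1⟩ with hz
  have hre : ‖z‖ * Real.cos z.arg = v 0 := Complex.norm_mul_cos_arg z
  have him : ‖z‖ * Real.sin z.arg = v 1 := Complex.norm_mul_sin_arg z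
  have hpi := Real.pi_pos
  refine ⟨z.arg / π, ⟨?_, ?_⟩, ?_⟩
  · rw [le_div_iff₀ hpi]; linarith [Complex.neg_pi_lt_arg z]
  · rw [div_le_iff₀ hpi]; linarith [Complex.arg_le_pi z]
  · rw [para_eq, ← br_eq_zero_iff]
    have : π * (z.arg / π) = z.arg := by field_simp
    simp only [br, vec, this, Matrix.cons_val_zero, Matrix.cons_val_one]
    linear_combination Real.sin z.arg * hre - Real.cos z.arg * him

lemma br_vec (t s : ℝ) : br (vec t) (vec s) = Real.sin (π * (s - t)) := by
  rw [mul_sub, Real.sin_sub]; simp [br, vec]; ring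

lemma cr_para (z w t s : ℝ) : cr (para z) (para w) (para t) (para s) =
    Real.sin (π * (t - z)) * Real.sin (π * (s - w)) /
      (Real.sin (π * (s - z)) * Real.sin (π * (t - w))) := by
  simp only [para_eq]
  rw [cr_mk]
  simp only [br_vec]

lemma para_ne_iff (t s : ℝ) : para t ≠ para s ↔ br (vec t) (vec s) ≠ 0 := by
  rw [para_eq, para_eq, Ne, ← br_eq_zero_iff]

lemma isOpen_offDiag2 : IsOpen offDiag2 := by
  have : offDiag2 = {q : ℝ × ℝ | Real.sin (π * (q.2 - q.1)) ≠ 0} := by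
    ext q; simp only [offDiag2, mem_ofPred_eq, para_ne_iff, br_vec]
  rw [this]
  exact isOpen_ne_fun (by fun_prop) (by fun_prop)

lemma contDiffAt_cr {a b : RP1} {q : ℝ × ℝ} (ha : a ≠ para q.2) (hb : b ≠ para q.1) :
    ContDiffAt ℝ (⊤ : ℕ∞) (fun q : ℝ × ℝ => cr a b (para q.1) (para q.2)) q := by
  obtain ⟨z, -, rfl⟩ := exists_para a
  obtain ⟨w, -, rfl⟩ := exists_para b
  rw [para_ne_iff, br_vec] at ha hb
  simp only [cr_para]
  refine ContDiffAt.div (by fun_prop) (by fun_prop) (mul_ne_zero ha hb)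

/-! ### The smallest cross-ratio -/

/-- The cross-ratios of `x, y` with all pairs of points of `L`. -/
def crSet (L : Set RP1) (x y : RP1) : Set ℝ := {r | ∃ a ∈ L, ∃ b ∈ L, r = cr a b x y}

/-- The smooth cutoff, applied to the infimum of the cross-ratios. When these are unbounded below
the infimum is the junk value `0`, at which the cutoff vanishes as it should. -/
def sigmaFun (L : Set RP1) (x y : RP1) : ℝ :=
  Real.smoothTransition (4 * sInf (crSet L x y) - 1)

lemma sigmaFun_eq_zero {L : Set RP1} {x y a b : RP1} (ha : a ∈ L) (hb : b ∈ L)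
    (h : cr a b x y ≤ 1 / 4) : sigmaFun L x y = 0 := by
  have hle : sInf (crSet L x y) ≤ 1 / 4 := by
    by_cases hbd : BddBelow (crSet L x y)
    · exact (csInf_le hbd ⟨a, ha, b, hb, rfl⟩).trans h
    · rw [Real.sInf_of_not_bddBelow hbd]; norm_num
  exact Real.smoothTransition.zero_of_nonpos (by linarith)

lemma crSet_invariant {L : Set RP1} (f : RP1 → RP1) (hf : IsMobius f) (hfL : f '' L = L)
    (x y : RP1) : crSet L (f x) (f y) = crSet L x y := by
  obtain ⟨M, rfl⟩ := hf
  ext r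
  constructor
  · rintro ⟨a, ha, b, hb, rfl⟩
    rw [← hfL] at ha hb
    obtain ⟨a, ha, rfl⟩ := ha
    obtain ⟨b, hb, rfl⟩ := hb
    exact ⟨a, ha, b, hb, cr_mobius M a b x y⟩
  · rintro ⟨a, ha, b, hb, rfl⟩
    exact ⟨_, hfL ▸ mem_image_of_mem _ ha, _, hfL ▸ mem_image_of_mem _ hb,
      (cr_mobius M a b x y).symm⟩

/-- The inequality `1 ≤ c(a, b; x, y)` persists along a connected set of pairs `(x, y)` of distinct
points outside `L`, because the cross-ratio never equals `1` there unless `a = b`. -/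
lemma one_le_cr_persists {L : Set RP1} {U : Set (ℝ × ℝ)} (hU : IsPreconnected U)
    (h1 : ∀ q ∈ U, para q.1 ∉ L) (h2 : ∀ q ∈ U, para q.2 ∉ L) (h3 : U ⊆ offDiag2)
    {a b : RP1} (ha : a ∈ L) (hb : b ∈ L) {q₀ q : ℝ × ℝ} (hq₀ : q₀ ∈ U) (hq : q ∈ U)
    (h : 1 ≤ cr a b (para q₀.1) (para q₀.2)) : 1 ≤ cr a b (para q.1) (para q.2) := by
  have hne1 : ∀ c ∈ L, ∀ p ∈ U, c ≠ para p.1 := fun c hc p hp e => h1 p hp (e ▸ hc)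
  have hne2 : ∀ c ∈ L, ∀ p ∈ U, c ≠ para p.2 := fun c hc p hp e => h2 p hp (e ▸ hc)
  by_cases hab : a = b
  · subst hab
    rw [cr_self (hne1 a ha q hq) (hne2 a ha q hq)]
  · by_contra! hlt
    have hcont : ContinuousOn (fun q : ℝ × ℝ => cr a b (para q.1) (para q.2)) U := fun p hp =>
      (contDiffAt_cr (hne2 a ha p hp) (hne1 b hb p hp)).continuousAt.continuousWithinAt
    obtain ⟨p, hp, hp1⟩ := hU.intermediate_value hq hq₀ hcont ⟨hlt.le, h⟩
    have hs := cr_sub_one (hne2 a ha p hp) (hne1 b hb p hp)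
    have hp1' : cr a b (para p.1) (para p.2) = 1 := hp1
    rw [hp1', sub_self, eq_comm] at hs
    exact div_ne_zero (mul_ne_zero (br_rep_ne_zero hab) (br_rep_ne_zero (h3 hp)))
      (mul_ne_zero (br_rep_ne_zero (hne2 a ha p hp)) (br_rep_ne_zero (hne1 b hb p hp))) hs

/-- A pair `(a₀, b₀)` minimizing a positive cross-ratio at one point of a connected set of pairs of
distinct points outside `L` minimizes it on the whole set, by
`c(a, b) = c(a, a₀) c(a₀, b₀) c(b₀, b)`. -/
lemma cr_min_persists {L : Set RP1} {U : Set (ℝ × ℝ)} (hU : IsPreconnected U)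
    (h1 : ∀ q ∈ U, para q.1 ∉ L) (h2 : ∀ q ∈ U, para q.2 ∉ L) (h3 : U ⊆ offDiag2)
    {a₀ b₀ : RP1} (ha₀ : a₀ ∈ L) (hb₀ : b₀ ∈ L) {q₀ : ℝ × ℝ} (hq₀ : q₀ ∈ U)
    (hpos : 0 < cr a₀ b₀ (para q₀.1) (para q₀.2))
    (hmin : ∀ a ∈ L, ∀ b ∈ L,
      cr a₀ b₀ (para q₀.1) (para q₀.2) ≤ cr a b (para q₀.1) (para q₀.2))
    {q : ℝ × ℝ} (hq : q ∈ U) (hposq : 0 < cr a₀ b₀ (para q.1) (para q.2)) :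
    IsLeast (crSet L (para q.1) (para q.2)) (cr a₀ b₀ (para q.1) (para q.2)) := by
  have hne1 : ∀ c ∈ L, ∀ p ∈ U, c ≠ para p.1 := fun c hc p hp e => h1 p hp (e ▸ hc)
  have hne2 : ∀ c ∈ L, ∀ p ∈ U, c ≠ para p.2 := fun c hc p hp e => h2 p hp (e ▸ hc)
  refine ⟨⟨a₀, ha₀, b₀, hb₀, rfl⟩, ?_⟩
  rintro _ ⟨a, ha, b, hb, rfl⟩
  have hA : 1 ≤ cr a a₀ (para q.1) (para q.2) := by
    refine one_le_cr_persists hU h1 h2 h3 ha ha₀ hq₀ hq ?_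
    have := cr_mul (a := a) (c := b₀) (hne1 a₀ ha₀ q₀ hq₀) (hne2 a₀ ha₀ q₀ hq₀)
    have h := hmin a ha b₀ hb₀
    rw [← this] at h
    exact (le_mul_iff_one_le_left hpos).1 h
  have hB : 1 ≤ cr b₀ b (para q.1) (para q.2) := by
    refine one_le_cr_persists hU h1 h2 h3 hb₀ hb hq₀ hq ?_
    have := cr_mul (a := a₀) (c := b) (hne1 b₀ hb₀ q₀ hq₀) (hne2 b₀ hb₀ q₀ hq₀)
    have h := hmin a₀ ha₀ b hb
    rw [← this] at h
    exact (le_mul_iff_one_le_right hpos).1 h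
  rw [← cr_mul (a := a) (c := b) (hne1 a₀ ha₀ q hq) (hne2 a₀ ha₀ q hq),
    ← cr_mul (a := a₀) (c := b) (hne1 b₀ hb₀ q hq) (hne2 b₀ hb₀ q hq)]
  calc _ ≤ cr a₀ b₀ (para q.1) (para q.2) * cr b₀ b (para q.1) (para q.2) :=
        le_mul_of_one_le_right hposq.le hB
    _ ≤ _ := le_mul_of_one_le_left (mul_nonneg hposq.le (zero_le_one.trans hB)) hA

/-- The angles in `[-1, 1]` of the points of `L`; they cover `L`, and form a compact set when `L` is
closed. -/
def angles (L : Set RP1) : Set ℝ := Icc (-1) 1 ∩ para ⁻¹' L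

lemma isCompact_angles {L : Set RP1} (hL : IsClosed L) : IsCompact (angles L) :=
  isCompact_Icc.inter_right (hL.preimage continuous_para)

lemma exists_angle {L : Set RP1} {a : RP1} (ha : a ∈ L) : ∃ z ∈ angles L, para z = a := by
  obtain ⟨z, hz, rfl⟩ := exists_para a
  exact ⟨z, ⟨hz, ha⟩, rfl⟩

lemma exists_min_cr {L : Set RP1} (hL : IsClosed L) (hne : L.Nonempty) {q : ℝ × ℝ}
    (h1 : para q.1 ∉ L) (h2 : para q.2 ∉ L) :
    ∃ a₀ ∈ L, ∃ b₀ ∈ L, ∀ a ∈ L, ∀ b ∈ L,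
      cr a₀ b₀ (para q.1) (para q.2) ≤ cr a b (para q.1) (para q.2) := by
  have hK := (isCompact_angles hL).prod (isCompact_angles hL)
  obtain ⟨c, hc⟩ := hne
  obtain ⟨z, hz, rfl⟩ := exists_angle hc
  have hcont : ContinuousOn (fun p : ℝ × ℝ => cr (para p.1) (para p.2) (para q.1) (para q.2))
      (angles L ×ˢ angles L) := by
    rintro ⟨z, w⟩ ⟨hz, hw⟩
    have hz' : para z ≠ para q.2 := fun e => h2 (e ▸ hz.2)
    have hw' : para w ≠ para q.1 := fun e => h1 (e ▸ hw.2)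
    rw [para_ne_iff, br_vec] at hz' hw'
    apply ContinuousAt.continuousWithinAt
    simp only [cr_para]
    exact ContinuousAt.div (by fun_prop) (by fun_prop) (mul_ne_zero hz' hw')
  have hne : (angles L ×ˢ angles L).Nonempty := ⟨(z, z), mk_mem_prod hz hz⟩
  obtain ⟨p₀, hp₀, hmin⟩ := hK.exists_isMinOn hne hcont
  rw [isMinOn_iff] at hmin
  refine ⟨para p₀.1, hp₀.1.2, para p₀.2, hp₀.2.2, fun a ha b hb => ?_⟩
  obtain ⟨z, hz, rfl⟩ := exists_angle ha
  obtain ⟨w, hw, rfl⟩ := exists_angle hb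
  exact hmin (z, w) (mk_mem_prod hz hw)

/-! ### Smoothness and non-constancy -/

lemma sigmaFun_contDiffAt_of_small {L : Set RP1} {a b : RP1} (ha : a ∈ L) (hb : b ∈ L)
    {q : ℝ × ℝ} (hay : a ≠ para q.2) (hbx : b ≠ para q.1)
    (h : cr a b (para q.1) (para q.2) < 1 / 4) :
    ContDiffAt ℝ (⊤ : ℕ∞) (fun q : ℝ × ℝ => sigmaFun L (para q.1) (para q.2)) q := by
  have hev := (contDiffAt_cr hay hbx).continuousAt.eventually_lt continuousAt_const h
  refine (contDiffAt_const (c := (0 : ℝ))).congr_of_eventuallyEq ?_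
  filter_upwards [hev] with p hp
  exact sigmaFun_eq_zero ha hb hp.le

lemma sigmaFun_contDiffAt {L : Set RP1} (hL : IsClosed L) (hL2 : L.Nontrivial) {q : ℝ × ℝ}
    (hq : q ∈ offDiag2) :
    ContDiffAt ℝ (⊤ : ℕ∞) (fun q : ℝ × ℝ => sigmaFun L (para q.1) (para q.2)) q := by
  have br_self : ∀ u, br u u = 0 := fun u => by simp [br]; ring
  by_cases h1 : para q.1 ∈ L
  · obtain ⟨b, hb, hbx⟩ := hL2.exists_ne (para q.1)
    refine sigmaFun_contDiffAt_of_small h1 hb hq hbx ?_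
    simp [cr, br_self]
  by_cases h2 : para q.2 ∈ L
  · obtain ⟨a, ha, hay⟩ := hL2.exists_ne (para q.2)
    refine sigmaFun_contDiffAt_of_small ha h2 hay (Ne.symm hq) ?_
    simp [cr, br_self]
  obtain ⟨a₀, ha₀, b₀, hb₀, hmin⟩ := exists_min_cr hL hL2.nonempty h1 h2
  have hay : a₀ ≠ para q.2 := fun e => h2 (e ▸ ha₀)
  have hbx : b₀ ≠ para q.1 := fun e => h1 (e ▸ hb₀)
  rcases lt_or_ge (cr a₀ b₀ (para q.1) (para q.2)) (1 / 4) with hlt | hge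
  · exact sigmaFun_contDiffAt_of_small ha₀ hb₀ hay hbx hlt
  have hpos : 0 < cr a₀ b₀ (para q.1) (para q.2) := by linarith
  have hopen : IsOpen (offDiag2 ∩ ((fun p : ℝ × ℝ => para p.1) ⁻¹' Lᶜ ∩
      (fun p : ℝ × ℝ => para p.2) ⁻¹' Lᶜ)) :=
    isOpen_offDiag2.inter ((hL.isOpen_compl.preimage (continuous_para.comp continuous_fst)).inter
      (hL.isOpen_compl.preimage (continuous_para.comp continuous_snd)))
  obtain ⟨ε, hε, hball⟩ := Metric.isOpen_iff.1 hopen q ⟨hq, h1, h2⟩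
  have hc := contDiffAt_cr hay hbx
  have hev := continuousAt_const.eventually_lt hc.continuousAt hpos
  have hsm : ContDiffAt ℝ (⊤ : ℕ∞)
      (fun p : ℝ × ℝ => Real.smoothTransition (4 * cr a₀ b₀ (para p.1) (para p.2) - 1)) q :=
    (Real.smoothTransition.contDiffAt).comp q ((contDiffAt_const.mul hc).sub contDiffAt_const)
  refine hsm.congr_of_eventuallyEq ?_
  filter_upwards [hev, Metric.ball_mem_nhds q hε] with p hp hpU
  have := cr_min_persists (U := Metric.ball q ε) (convex_ball q ε).isPreconnected
    (fun r hr => (hball hr).2.1) (fun r hr => (hball hr).2.2) (fun r hr => (hball hr).1)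
    ha₀ hb₀ (Metric.mem_ball_self hε) hpos hmin hpU hp
  rw [sigmaFun, this.csInf_eq]

lemma exists_sigmaFun_ne_zero {L : Set RP1} (hL : IsClosed L) (hne : L.Nonempty) {x : RP1}
    (hx : x ∉ L) : ∃ y, x ≠ y ∧ sigmaFun L x y ≠ 0 := by
  obtain ⟨t, -, rfl⟩ := exists_para x
  have hK := (isCompact_angles hL).prod (isCompact_angles hL)
  have hev : ∀ᶠ s in 𝓝 t, ∀ p ∈ angles L ×ˢ angles L,
      1 / 2 < cr (para p.1) (para p.2) (para t) (para s) := by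
    apply hK.eventually_forall_of_forall_eventually
    rintro ⟨z, w⟩ ⟨hz, hw⟩
    have hzt : para z ≠ para t := fun e => hx (e ▸ hz.2)
    have hwt : para w ≠ para t := fun e => hx (e ▸ hw.2)
    have h1 : cr (para z) (para w) (para t) (para t) = 1 := by
      unfold cr
      exact div_self (mul_ne_zero (br_rep_ne_zero hzt) (br_rep_ne_zero hwt))
    have h' : ContinuousAt (fun p : ℝ × ℝ × ℝ =>
        cr (para p.2.1) (para p.2.2) (para t) (para p.1)) (t, (z, w)) := by
      rw [para_ne_iff, br_vec] at hzt hwt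
      simp only [cr_para]
      exact ContinuousAt.div (by fun_prop) (by fun_prop) (mul_ne_zero hzt hwt)
    exact continuousAt_const.eventually_lt h' (by simp only [h1]; norm_num)
  obtain ⟨ε, hε, hball⟩ := Metric.eventually_nhds_iff.1 hev
  obtain ⟨δ, hδ0, hδ⟩ := exists_between (lt_min hε one_pos)
  obtain ⟨hδε, hδ1⟩ := lt_min_iff.1 hδ
  refine ⟨para (t + δ), ?_, ?_⟩
  · rw [para_ne_iff, br_vec]
    refine (Real.sin_pos_of_pos_of_lt_pi ?_ ?_).ne' <;> nlinarith [Real.pi_pos]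
  · have hb := hball (y := t + δ) (by simp [abs_of_pos hδ0, hδε])
    obtain ⟨c, hc⟩ := hne
    have hle : 1 / 2 ≤ sInf (crSet L (para t) (para (t + δ))) := by
      refine le_csInf ⟨_, c, hc, c, hc, rfl⟩ ?_
      rintro _ ⟨a, ha, b, hb', rfl⟩
      obtain ⟨z, hz, rfl⟩ := exists_angle ha
      obtain ⟨w, hw, rfl⟩ := exists_angle hb'
      exact (hb (z, w) ⟨hz, hw⟩).le
    exact (Real.smoothTransition.pos_of_pos (by linarith)).ne'

/-- A subgroup of `PSL(2,ℝ)` with no finite orbit and an exceptional minimal set (limit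
set different from the whole circle) admits a nonconstant smooth invariant function on the
cylinder. -/
theorem stmt_13 {Γ : Type*} [Group Γ] (ρ : Γ →* Equiv.Perm RP1)
    (hmob : ∀ γ : Γ, IsMobius (ρ γ))
    (hnf : HasNoFiniteOrbit ρ)
    (L : Set RP1) (hL : IsLimitSet ρ L) (hLne : L ≠ Set.univ) :
    ∃ σ : RP1 → RP1 → ℝ,
      ContDiffOn ℝ (⊤ : ℕ∞) (fun q : ℝ × ℝ => σ (para q.1) (para q.2)) offDiag2 ∧
      (∀ γ : Γ, ∀ x y : RP1, x ≠ y → σ (ρ γ x) (ρ γ y) = σ x y) ∧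
      ∃ x y x' y' : RP1, x ≠ y ∧ x' ≠ y' ∧ σ x y ≠ σ x' y' := by
  obtain ⟨hne, hcl, hinv, -⟩ := hL
  obtain ⟨c, hc⟩ := hne
  have hinf : L.Infinite := (hnf c).mono <| by
    rintro _ ⟨γ, rfl⟩
    rw [← hinv γ]
    exact mem_image_of_mem _ hc
  obtain ⟨x, hx⟩ := (Set.ne_univ_iff_exists_notMem L).1 hLne
  obtain ⟨y, hxy, hσ⟩ := exists_sigmaFun_ne_zero hcl ⟨c, hc⟩ hx
  have hcx : c ≠ x := fun e => hx (e ▸ hc)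
  refine ⟨sigmaFun L, fun q hq => (sigmaFun_contDiffAt hcl hinf.nontrivial hq).contDiffWithinAt,
    ?_, x, y, c, x, hxy, hcx, ?_⟩
  · intro γ x y _
    rw [sigmaFun, sigmaFun, crSet_invariant _ (hmob γ) (hinv γ)]
  · have h0 : cr c c c x ≤ 1 / 4 := by
      have : br c.rep c.rep = 0 := by simp [br]; ring
      simp [cr, this]
    rwa [sigmaFun_eq_zero hc hc h0]

end
end
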